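/- Let p be a prime integer, ℓ ≥ 1 and k ≥ 0 integers, and let Λ be a finite cyclic subgroup of (ℝ/ℤ)^{d+1} which is non-pyramidal and has δ-polynomial 1 + t^{k+1} + t^{2(k+1)} + ⋯ + t^{(p^ℓ−1)(k+1)}. Then there exist an integer t ≥ 1, integers 0 = ℓ₀ < ℓ₁ < ⋯ < ℓ_t = ℓ, and positive integers s₁, …, s_t satisfying s_i = (p^{ℓ−ℓ_{i−1}} − p^{ℓ−ℓ_{i+1}})(k+1) for 1 ≤ i ≤ t−1 and s_t = p^{ℓ−ℓ_{t−1}}(k+1), such that s₁ + ⋯ + s_t = d+1 and, after a permutation of the coordinates, Λ is the cyclic subgroup generated by the element whose coordinates in the i-th consecutive block of size s_i all equal 1/p^{ℓ_i} (for i = 1, …, t). -/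

import Mathlib

open scoped BigOperators

local instance : Fact ((0:ℝ) < 1) := ⟨one_pos⟩

noncomputable def fracR (x : AddCircle (1:ℝ)) : ℝ :=
  ((AddCircle.equivIco 1 0) x : ℝ)

noncomputable def ht {ι : Type*} [Fintype ι] (x : ι → AddCircle (1:ℝ)) : ℝ :=
  ∑ i, fracR (x i)

/-- `Λ` has δ-polynomial `1 + t^step + t^(2*step) + ⋯ + t^((v-1)*step)` :
the height map is a bijection from `Λ` onto `{j*step : 0 ≤ j ≤ v-1}`. -/
def HasDeltaPoly {ι : Type*} [Fintype ι] (v step : ℕ)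
    (Λ : Set (ι → AddCircle (1:ℝ))) : Prop :=
  Set.BijOn ht Λ {y : ℝ | ∃ j : ℕ, j < v ∧ y = (j : ℝ) * (step : ℝ)}

def NonPyramidal {ι : Type*} [Fintype ι] (Λ : Set (ι → AddCircle (1:ℝ))) : Prop :=
  ∀ i : ι, ∃ x ∈ Λ, x i ≠ 0

/-!
The generator is built one block at a time. Let `u` generate a subgroup `H` of `Λ` whose heights are
`0, step, …, (M - 1) * step`, and let `w ∈ Λ` have height `M * step`. Heights on `Λ` are injective,
so subadditivity of the height improves to `ht (j • w + y) = j * ht w + ht y` for `y ∈ H` as long as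
`j` is below the order `p ^ r` of `w` modulo `H`; the fractional parts of `w` and `y` then add up
without carry in every coordinate. Taking `j = p ^ r - 1` and `y = -u`, a coordinate `1 / p ^ e` of
`u` leaves only the values `0` and `1 / p ^ (r + e)` for that coordinate of `w`. Hence
`p ^ r • w = u`, and `w` generates the next, larger subgroup. For the resulting generator `g`, the
block of coordinates `1 / p ^ L (b + 1)` is counted by comparing the heights of `p ^ L b • g` and
`p ^ L (b + 1) • g`: multiplication by `p ^ (L (b + 1) - L b)` carries exactly once on this block
and nowhere else.
-/

theorem fracR_coe (y : ℝ) : fracR (y : UnitAddCircle) = Int.fract y := by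
  simp [fracR, AddCircle.coe_equivIco_mk_apply]

theorem fracR_zero : fracR 0 = 0 := by
  simpa using fracR_coe 0

theorem fracR_lt_one (x : UnitAddCircle) : fracR x < 1 :=
  ((AddCircle.equivIco 1 0) x).2.2.trans_eq (zero_add 1)

theorem fracR_add_le (x y : UnitAddCircle) : fracR (x + y) ≤ fracR x + fracR y := by
  induction x using QuotientAddGroup.induction_on with | H a => ?_
  induction y using QuotientAddGroup.induction_on with | H b => ?_
  simpa only [← fracR_coe, AddCircle.coe_add] using Int.fract_add_le a b

theorem fracR_nsmul_add_le (j : ℕ) (x y : UnitAddCircle) :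
    fracR (j • x + y) ≤ j * fracR x + fracR y := by
  induction j with
  | zero => simp
  | succ j ih =>
    calc fracR ((j + 1) • x + y) = fracR (x + (j • x + y)) := by rw [succ_nsmul', add_assoc]
      _ ≤ fracR x + (j * fracR x + fracR y) := (fracR_add_le _ _).trans (by gcongr)
      _ = (j + 1 : ℕ) * fracR x + fracR y := by push_cast; ring

/-- The class of `p⁻ᵉ` in `ℝ/ℤ`, an element of order `pᵉ`; in particular `invPow p 0 = 0`. These
are the coordinates of the generators in the classification. -/
noncomputable def invPow (p e : ℕ) : UnitAddCircle :=
  ((1 / (p : ℝ) ^ e : ℝ) : UnitAddCircle)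

theorem invPow_zero (p : ℕ) : invPow p 0 = 0 := by
  simp [invPow, AddCircle.coe_period]

theorem pow_nsmul_invPow {p : ℕ} (hp : p ≠ 0) (a e : ℕ) :
    p ^ a • invPow p e = invPow p (e - a) := by
  have pow_nsmul_add (a b : ℕ) : p ^ a • invPow p (a + b) = invPow p b := by
    rw [invPow, invPow, ← AddCircle.coe_nsmul, nsmul_eq_mul, pow_add]
    congr 1
    push_cast
    field_simp
  rcases le_total a e with hae | hea
  · obtain ⟨b, rfl⟩ := Nat.exists_eq_add_of_le hae
    rw [pow_nsmul_add, Nat.add_sub_cancel_left]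
  · obtain ⟨b, rfl⟩ := Nat.exists_eq_add_of_le hea
    have : p ^ e • invPow p e = 0 := by simpa only [add_zero, invPow_zero] using pow_nsmul_add e 0
    rw [pow_add, mul_comm, mul_smul, this, smul_zero, Nat.sub_eq_zero_of_le hea, invPow_zero]

section OneLT

variable {p : ℕ} (hp : 1 < p)
include hp

theorem fracR_invPow {e : ℕ} (he : e ≠ 0) : fracR (invPow p e) = 1 / (p : ℝ) ^ e := by
  have hp' : (1 : ℝ) < p := mod_cast hp
  rw [invPow, fracR_coe, Int.fract_eq_self, div_lt_one (by positivity)]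
  exact ⟨by positivity, one_lt_pow₀ hp' he⟩

theorem invPow_eq_zero_iff {e : ℕ} : invPow p e = 0 ↔ e = 0 := by
  refine ⟨fun h => by_contra fun he => ?_, fun h => h ▸ invPow_zero p⟩
  have : (0 : ℝ) < 1 / (p : ℝ) ^ e := by positivity
  rw [← fracR_invPow hp he, h, fracR_zero] at this
  exact this.false

theorem fracR_neg_invPow (e : ℕ) : fracR (-invPow p e) = 1 - 1 / (p : ℝ) ^ e := by
  have hp' : (1 : ℝ) ≤ p := mod_cast hp.le
  have hle : 1 / (p : ℝ) ^ e ≤ 1 := (div_le_one (by positivity)).2 (one_le_pow₀ hp')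
  have hpos : 0 < 1 / (p : ℝ) ^ e := by positivity
  have : -invPow p e = ((1 - 1 / (p : ℝ) ^ e : ℝ) : UnitAddCircle) := by
    rw [AddCircle.coe_sub, AddCircle.coe_period, zero_sub, invPow]
  rw [this, fracR_coe, Int.fract_eq_self]
  constructor <;> linarith

theorem eq_zero_or_eq_invPow {e : ℕ} {x : UnitAddCircle} (hx : p ^ e • x = 0)
    (hlt : (p : ℝ) ^ e * fracR x < 2) : x = 0 ∨ x = invPow p e := by
  obtain ⟨c, hc, rfl⟩ := (AddCircle.nsmul_eq_zero_iff (by positivity)).1 hx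
  have hc' : (c : ℝ) < (p : ℝ) ^ e := mod_cast hc
  have hfrac : Int.fract ((c : ℝ) / (p : ℝ) ^ e) = c / (p : ℝ) ^ e :=
    Int.fract_eq_self.2 ⟨by positivity, (div_lt_one (by positivity)).2 hc'⟩
  simp only [mul_one, Nat.cast_pow, fracR_coe, hfrac] at hlt ⊢
  rw [mul_div_cancel₀ _ (by positivity)] at hlt
  have : c < 2 := mod_cast hlt
  interval_cases c
  · left; simp
  · right; simp [invPow]

/-- The bound `fracR < 1` at `(p ^ r - 1) • x - invPow p e` forces
`(p ^ r - 1) * fracR x < 1 / p ^ e`, which leaves only the numerators `0` and `1` for `x`. -/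
theorem eq_zero_or_eq_invPow_add {r e : ℕ} (hr : 0 < r) {x : UnitAddCircle}
    (hx : p ^ r • x ∈ AddSubgroup.zmultiples (invPow p e))
    (hadd : fracR ((p ^ r - 1) • x + -invPow p e) =
      (p ^ r - 1 : ℕ) * fracR x + fracR (-invPow p e)) :
    x = 0 ∨ x = invPow p (r + e) := by
  apply eq_zero_or_eq_invPow hp
  · obtain ⟨z, hz : z • invPow p e = _⟩ := hx
    rw [pow_add, mul_comm, mul_smul, ← hz, smul_comm, pow_nsmul_invPow (by positivity),
      Nat.sub_self, invPow_zero, smul_zero]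
  · have hq : (0 : ℝ) < (p : ℝ) ^ e := by positivity
    have hpr : (2 : ℝ) ≤ (p : ℝ) ^ r := mod_cast Nat.one_lt_pow hr.ne' hp
    have hlt := hadd ▸ fracR_lt_one ((p ^ r - 1) • x + -invPow p e)
    rw [fracR_neg_invPow hp, Nat.cast_sub (Nat.one_le_pow _ _ (by positivity)), Nat.cast_pow,
      Nat.cast_one] at hlt
    have hlt' : ((p : ℝ) ^ r - 1) * fracR x < 1 / (p : ℝ) ^ e := by linarith
    rw [lt_div_iff₀ hq] at hlt'
    rw [pow_add]
    rcases le_or_gt (fracR x) 0 with hneg | hpos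
    · nlinarith [mul_pos (show (0 : ℝ) < (p : ℝ) ^ r by positivity) hq]
    · nlinarith [mul_pos hpos hq]

theorem pow_sub_mul_fracR_nsmul_invPow {a b e : ℕ} (hab : a < b) (he : e ≤ a ∨ b ≤ e) :
    (p : ℝ) ^ (b - a) * fracR (p ^ a • invPow p e) =
      (if e = b then 1 else 0) + fracR (p ^ b • invPow p e) := by
  rw [pow_nsmul_invPow (by positivity), pow_nsmul_invPow (by positivity)]
  rcases he with hea | hbe
  · rw [Nat.sub_eq_zero_of_le hea, Nat.sub_eq_zero_of_le (hea.trans hab.le),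
      invPow_zero, fracR_zero, if_neg (by omega), mul_zero, add_zero]
  rw [fracR_invPow hp (by omega)]
  rcases hbe.eq_or_lt with rfl | hlt
  · rw [if_pos rfl, Nat.sub_self, invPow_zero, fracR_zero]
    field_simp
    ring
  · rw [if_neg hlt.ne', fracR_invPow hp (by omega), show e - a = (b - a) + (e - b) by omega,
      pow_add]
    field_simp
    ring

end OneLT

section Height

variable {ι : Type*} [Fintype ι]

theorem ht_zero : ht (0 : ι → UnitAddCircle) = 0 := by
  simp [ht, fracR_zero]

theorem ht_nsmul_add_le (j : ℕ) (x y : ι → UnitAddCircle) :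
    ht (j • x + y) ≤ j * ht x + ht y := by
  simp only [ht, Finset.mul_sum, ← Finset.sum_add_distrib]
  exact Finset.sum_le_sum fun i _ => fracR_nsmul_add_le j (x i) (y i)

theorem fracR_nsmul_add_of_ht_nsmul_add {j : ℕ} {x y : ι → UnitAddCircle}
    (h : ht (j • x + y) = j * ht x + ht y) (i : ι) :
    fracR (j • x i + y i) = j * fracR (x i) + fracR (y i) := by
  simp only [ht, Finset.mul_sum, ← Finset.sum_add_distrib] at h
  exact (Finset.sum_eq_sum_iff_of_le
    fun i _ => fracR_nsmul_add_le j (x i) (y i)).1 h i (Finset.mem_univ i)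

theorem HasDeltaPoly.natCard_eq {v step : ℕ} (hstep : 0 < step)
    {Λ : Set (ι → UnitAddCircle)} (hΛ : HasDeltaPoly v step Λ) : Nat.card Λ = v := by
  have himage : {y : ℝ | ∃ j : ℕ, j < v ∧ y = (j : ℝ) * (step : ℝ)} =
      (fun j : ℕ => (j : ℝ) * (step : ℝ)) '' Set.Iio v := by
    ext y
    simp [eq_comm]
  have hinj : Function.Injective fun j : ℕ => (j : ℝ) * (step : ℝ) :=
    (mul_left_injective₀ (by positivity)).comp Nat.cast_injective
  rw [Nat.card_congr (Set.BijOn.equiv _ hΛ), himage, Nat.card_image_of_injective hinj]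
  simp

theorem hasDeltaPoly_one_bot (step : ℕ) :
    HasDeltaPoly 1 step ((⊥ : AddSubgroup (ι → UnitAddCircle)) : Set (ι → UnitAddCircle)) := by
  have h : {y : ℝ | ∃ j : ℕ, j < 1 ∧ y = (j : ℝ) * (step : ℝ)} = {0} := by
    ext y
    simp
  rw [HasDeltaPoly, h, AddSubgroup.coe_bot, Set.bijOn_singleton]
  exact ht_zero

theorem eq_and_eq_of_nsmul_add_eq {G : Type*} [AddCommGroup G] {H : AddSubgroup G} {w y y' : G}
    {r i j : ℕ} (hr : ∀ n : ℕ, n • w ∈ H → r ∣ n) (hij : i ≤ j) (hj : j < r) (hy : y ∈ H)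
    (hy' : y' ∈ H) (h : j • w + y = i • w + y') : j = i ∧ y = y' := by
  have hsub : (j - i) • w = y' - y := by
    rw [sub_nsmul _ hij, ← sub_eq_add_neg, sub_eq_sub_iff_add_eq_add, h, add_comm]
  have hdvd : r ∣ j - i := hr _ (hsub ▸ sub_mem hy' hy)
  have hzero := Nat.eq_zero_of_dvd_of_lt hdvd ((Nat.sub_le _ _).trans_lt hj)
  obtain rfl : j = i := by omega
  exact ⟨rfl, add_left_cancel h⟩

section Extension

variable {v step M r : ℕ} {Λ H : AddSubgroup (ι → UnitAddCircle)} {w : ι → UnitAddCircle}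
  (hstep : 0 < step) (hΛ : HasDeltaPoly v step (Λ : Set (ι → UnitAddCircle)))
  (hH : HasDeltaPoly M step (H : Set (ι → UnitAddCircle))) (hHΛ : H ≤ Λ) (hwΛ : w ∈ Λ)
  (hw : ht w = (M : ℝ) * (step : ℝ))
include hstep hΛ hH hHΛ hwΛ hw

/-- Strong induction on the expected height `(j * M + a) * step`: if the height of `j • w + y` were
smaller, it would by induction be attained at another such sum, against injectivity on `Λ`. -/
theorem HasDeltaPoly.ht_nsmul_add (hr : ∀ j : ℕ, j • w ∈ H → r ∣ j) {j : ℕ} (hj : j < r)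
    {y : ι → UnitAddCircle} (hy : y ∈ H) : ht (j • w + y) = j * ht w + ht y := by
  have hstep' : (0 : ℝ) < step := mod_cast hstep
  obtain ⟨a, ha, hya⟩ := hH.mapsTo hy
  induction hN : j * M + a using Nat.strong_induction_on generalizing j y a with
  | _ N ih =>
    have hmem : j • w + y ∈ Λ := add_mem (nsmul_mem hwΛ j) (hHΛ hy)
    obtain ⟨b, -, hb⟩ := hΛ.mapsTo hmem
    have hbN : b ≤ N := by
      have : (b : ℝ) * step ≤ (N : ℝ) * step := by
        calc (b : ℝ) * step = ht (j • w + y) := hb.symm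
          _ ≤ j * ht w + ht y := ht_nsmul_add_le j w y
          _ = (N : ℝ) * step := by rw [hw, hya, ← hN]; push_cast; ring
      exact_mod_cast le_of_mul_le_mul_right this hstep'
    rcases hbN.eq_or_lt with rfl | hlt
    · rw [hb, hw, hya, ← hN]
      push_cast
      ring
    exfalso
    obtain ⟨y', hy', hya'⟩ := hH.surjOn ⟨b % M, Nat.mod_lt _ (by omega), rfl⟩
    have hdiv : b / M ≤ j :=
      Nat.lt_succ_iff.1 ((Nat.div_lt_iff_lt_mul (by omega)).2 (by rw [Nat.succ_mul]; omega))
    have hht : ht ((b / M) • w + y') = b * step := by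
      rw [ih b hlt (hdiv.trans_lt hj) hy' _ (Nat.mod_lt _ (by omega)) hya' (Nat.div_add_mod' b M),
        hw, hya', ← mul_assoc, ← add_mul]
      congr 1
      exact_mod_cast Nat.div_add_mod' b M
    have heq : j • w + y = (b / M) • w + y' :=
      hΛ.injOn hmem (add_mem (nsmul_mem hwΛ _) (hHΛ hy')) (hb.trans hht.symm)
    obtain ⟨hjb, rfl⟩ := eq_and_eq_of_nsmul_add_eq hr hdiv hj hy hy' heq
    have hab : a = b % M := by exact_mod_cast mul_right_cancel₀ hstep'.ne' (hya.symm.trans hya')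
    have := Nat.div_add_mod' b M
    rw [← hjb, ← hab] at this
    omega

theorem HasDeltaPoly.sup_zmultiples (hr0 : 0 < r) (hr : ∀ j : ℕ, j • w ∈ H ↔ r ∣ j) :
    HasDeltaPoly (r * M) step ((H ⊔ AddSubgroup.zmultiples w : AddSubgroup (ι → UnitAddCircle)) :
      Set (ι → UnitAddCircle)) := by
  have ht_add {j : ℕ} (hj : j < r) {y} (hy : y ∈ H) : ht (j • w + y) = j * ht w + ht y :=
    hΛ.ht_nsmul_add hstep hH hHΛ hwΛ hw (fun j => (hr j).1) hj hy
  refine ⟨?_, hΛ.injOn.mono (sup_le hHΛ (by simpa using hwΛ)), ?_⟩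
  · intro x hx
    obtain ⟨y, hy, _, ⟨z, rfl⟩, rfl⟩ := AddSubgroup.mem_sup.1 hx
    obtain ⟨j, hj⟩ := Int.eq_ofNat_of_zero_le (Int.emod_nonneg z (by omega : (r : ℤ) ≠ 0))
    have hjr : j < r := by exact_mod_cast hj ▸ Int.emod_lt_of_pos z (by omega : (0 : ℤ) < r)
    set y' := (z / r) • (r • w) + y
    have hy' : y' ∈ H := add_mem (zsmul_mem ((hr r).2 dvd_rfl) _) hy
    have hzw : y + z • w = j • w + y' := by
      rw [add_comm y, ← add_assoc, ← natCast_zsmul w j, ← hj, ← natCast_zsmul w r, ← mul_smul,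
        ← add_smul, Int.emod_add_ediv_mul]
    obtain ⟨a, ha, hya⟩ := hH.mapsTo hy'
    refine ⟨j * M + a, ?_, ?_⟩
    · calc j * M + a < (j + 1) * M := by rw [add_mul]; omega
        _ ≤ r * M := Nat.mul_le_mul_right _ hjr
    · simp only [hzw, ht_add hjr hy', hya, hw]
      push_cast
      ring
  · rintro _ ⟨n, hn, rfl⟩
    have hM : 0 < M := Nat.pos_of_mul_pos_left (by omega : 0 < r * M)
    obtain ⟨y, hy, hya⟩ := hH.surjOn ⟨n % M, Nat.mod_lt _ hM, rfl⟩
    refine ⟨(n / M) • w + y, ?_, ?_⟩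
    · exact add_mem (nsmul_mem (AddSubgroup.mem_sup_right (AddSubgroup.mem_zmultiples w)) _)
        (AddSubgroup.mem_sup_left hy)
    · rw [ht_add ((Nat.div_lt_iff_lt_mul hM).2 hn) hy, hya, hw, ← mul_assoc, ← add_mul]
      congr 1
      exact_mod_cast Nat.div_add_mod' n M

end Extension

end Height

section CyclicGroup

variable {G : Type*} [AddCommGroup G] {Λ : AddSubgroup G} [Finite Λ] [IsAddCyclic Λ] {u w : G}

theorem mem_zmultiples_iff_addOrderOf_dvd (hu : u ∈ Λ) (hw : w ∈ Λ) :
    u ∈ AddSubgroup.zmultiples w ↔ addOrderOf u ∣ addOrderOf w := by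
  classical
  refine ⟨addOrderOf_dvd_of_mem_zmultiples, fun hdvd => ?_⟩
  have := Fintype.ofFinite Λ
  let u' : Λ := ⟨u, hu⟩
  let w' : Λ := ⟨w, hw⟩
  let torsion : Finset Λ := {x | addOrderOf w' • x = 0}
  have hle : (AddSubgroup.zmultiples w' : Set Λ).toFinset ⊆ torsion := by
    intro x hx
    rw [Set.mem_toFinset] at hx
    exact Finset.mem_filter_univ _ |>.2 <|
      addOrderOf_dvd_iff_nsmul_eq_zero.1 (addOrderOf_dvd_of_mem_zmultiples hx)
  have hcard : torsion.card ≤ (AddSubgroup.zmultiples w' : Set Λ).toFinset.card := by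
    rw [Set.toFinset_card, ← Nat.card_eq_fintype_card]
    exact (IsAddCyclic.card_nsmul_eq_zero_le (addOrderOf_pos w')).trans_eq
      (Nat.card_zmultiples w').symm
  have hu' : u' ∈ torsion := by
    rw [Finset.mem_filter_univ, ← addOrderOf_dvd_iff_nsmul_eq_zero]
    simpa [u', w'] using hdvd
  rw [← Finset.eq_of_subset_of_card_le hle hcard, Set.mem_toFinset] at hu'
  obtain ⟨z, hz⟩ := hu'
  exact ⟨z, congrArg Subtype.val hz⟩

theorem mem_zmultiples_and_exists_nsmul_mem_iff {p ℓ m : ℕ} (hp : p.Prime)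
    (hΛ : Nat.card Λ = p ^ ℓ) (hu : u ∈ Λ) (hm : addOrderOf u = p ^ m) (hw : w ∈ Λ)
    (hwu : w ∉ AddSubgroup.zmultiples u) :
    u ∈ AddSubgroup.zmultiples w ∧
      ∃ r, 0 < r ∧ ∀ j : ℕ, j • w ∈ AddSubgroup.zmultiples u ↔ p ^ r ∣ j := by
  obtain ⟨n, -, hn⟩ : ∃ n ≤ ℓ, addOrderOf w = p ^ n :=
    (Nat.dvd_prime_pow hp).1 (hΛ ▸ AddSubgroup.addOrderOf_dvd_natCard Λ hw)
  simp only [mem_zmultiples_iff_addOrderOf_dvd hu hw, hm, hn,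
    Nat.pow_dvd_pow_iff_le_right hp.one_lt, mem_zmultiples_iff_addOrderOf_dvd hw hu] at hwu ⊢
  refine ⟨by omega, n - m, by omega, fun j => ?_⟩
  rw [mem_zmultiples_iff_addOrderOf_dvd (nsmul_mem hw j) hu, hm, addOrderOf_dvd_iff_nsmul_eq_zero,
    ← mul_smul, ← addOrderOf_dvd_iff_nsmul_eq_zero, hn,
    show p ^ n = p ^ m * p ^ (n - m) by rw [← pow_add]; congr 1; omega]
  exact Nat.mul_dvd_mul_iff_left (pow_pos hp.pos m)

end CyclicGroup

section Staircase

variable {ι : Type*} [Fintype ι]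

/-- The normal form of a generator `g` of a cyclic group whose heights are the multiples of `step`
below `p ^ L t * step`: each coordinate is the class of `1 / p ^ L b` for one of the exponents
`0 = L 0 < ⋯ < L t`. The block sizes are encoded by the heights of the `p ^ L b • g`, and a block of
zero coordinates `invPow p (L 0)` is allowed, so that induction can start at `g = 0`. -/
structure IsStaircase (p step : ℕ) {t : ℕ} (L : Fin (t + 1) → ℕ) (g : ι → UnitAddCircle) :
    Prop where
  map_zero : L 0 = 0
  strictMono : StrictMono L
  exists_eq_invPow : ∀ i, ∃ b, g i = invPow p (L b)
  ht_nsmul : ∀ b : Fin t,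
    ht (p ^ L b.castSucc • g) = (p : ℝ) ^ (L (Fin.last t) - L b.succ) * (step : ℝ)
  hasDeltaPoly : HasDeltaPoly (p ^ L (Fin.last t)) step
    (AddSubgroup.zmultiples g : Set (ι → UnitAddCircle))

theorem isStaircase_zero (p step : ℕ) :
    IsStaircase p step (fun _ : Fin 1 => 0) (0 : ι → UnitAddCircle) where
  map_zero := rfl
  strictMono := Fin.strictMono_iff_lt_succ.2 fun b => b.elim0
  exists_eq_invPow _ := ⟨0, (invPow_zero p).symm⟩
  ht_nsmul b := b.elim0
  hasDeltaPoly := by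
    rw [pow_zero, AddSubgroup.zmultiples_zero_eq_bot]
    exact hasDeltaPoly_one_bot step

namespace IsStaircase

variable {p step t : ℕ} {L : Fin (t + 1) → ℕ}

theorem vecCons {r : ℕ} {w : ι → UnitAddCircle} (h : IsStaircase p step L (p ^ r • w))
    (hr : 0 < r) (hw : ∀ i, w i = 0 ∨ ∃ b, w i = invPow p (r + L b))
    (hht : ht w = (p : ℝ) ^ L (Fin.last t) * (step : ℝ))
    (hδ : HasDeltaPoly (p ^ (r + L (Fin.last t))) step
      (AddSubgroup.zmultiples w : Set (ι → UnitAddCircle))) :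
    IsStaircase p step (Matrix.vecCons 0 fun b => r + L b) w where
  map_zero := rfl
  strictMono := (h.strictMono.const_add r).vecCons (by omega)
  exists_eq_invPow i := by
    rcases hw i with h0 | ⟨b, hb⟩
    · exact ⟨0, h0.trans (invPow_zero p).symm⟩
    · exact ⟨b.succ, hb⟩
  ht_nsmul b := by
    rw [← Fin.succ_last, Matrix.cons_val_succ, Matrix.cons_val_succ, Nat.add_sub_add_left]
    cases b using Fin.cases with
    | zero => simp [hht, h.map_zero]
    | succ b =>
      rw [← Fin.succ_castSucc, Matrix.cons_val_succ, add_comm r, pow_add, mul_smul, h.ht_nsmul]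
  hasDeltaPoly := hδ

theorem exists_invPow_of_ht_nsmul_add {u w : ι → UnitAddCircle} (h : IsStaircase p step L u)
    (hp : 1 < p) {r : ℕ} (hr : 0 < r) (hmem : p ^ r • w ∈ AddSubgroup.zmultiples u)
    (hadd : ht ((p ^ r - 1) • w + -u) = (p ^ r - 1 : ℕ) * ht w + ht (-u)) (i : ι) :
    ∃ b, u i = invPow p (L b) ∧ (w i = 0 ∨ w i = invPow p (r + L b)) := by
  obtain ⟨b, hb⟩ := h.exists_eq_invPow i
  refine ⟨b, hb, eq_zero_or_eq_invPow_add hp hr ?_ ?_⟩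
  · obtain ⟨z, hz : z • u = p ^ r • w⟩ := hmem
    exact ⟨z, by simpa [hb] using congrFun hz i⟩
  · simpa only [Pi.neg_apply, hb] using fracR_nsmul_add_of_ht_nsmul_add hadd i

theorem exists_vecCons {ℓ : ℕ} (hp : p.Prime) (hstep : 0 < step)
    {Λ : AddSubgroup (ι → UnitAddCircle)} [IsAddCyclic Λ]
    (hΛ : HasDeltaPoly (p ^ ℓ) step (Λ : Set (ι → UnitAddCircle)))
    {u : ι → UnitAddCircle} (h : IsStaircase p step L u) (huΛ : u ∈ Λ) (hlt : L (Fin.last t) < ℓ) :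
    ∃ r w, 0 < r ∧ w ∈ Λ ∧ IsStaircase p step (Matrix.vecCons 0 fun b => r + L b) w := by
  have hcard : Nat.card Λ = p ^ ℓ := hΛ.natCard_eq hstep
  have : Finite Λ := Nat.finite_of_card_ne_zero (hcard.trans_ne (pow_pos hp.pos ℓ).ne')
  have hu_order : addOrderOf u = p ^ L (Fin.last t) :=
    (Nat.card_zmultiples u).symm.trans (h.hasDeltaPoly.natCard_eq hstep)
  obtain ⟨w, hwΛ, hw⟩ := hΛ.surjOn ⟨p ^ L (Fin.last t), Nat.pow_lt_pow_right hp.one_lt hlt, rfl⟩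
  have hwu : w ∉ AddSubgroup.zmultiples u := by
    intro hmem
    obtain ⟨a, ha, hwa⟩ := h.hasDeltaPoly.mapsTo hmem
    have : a = p ^ L (Fin.last t) := by
      exact_mod_cast mul_right_cancel₀ (by positivity) (hwa.symm.trans hw)
    exact ha.ne this
  obtain ⟨huw, r, hr, hrw⟩ :=
    mem_zmultiples_and_exists_nsmul_mem_iff hp hcard huΛ hu_order hwΛ hwu
  have hle : AddSubgroup.zmultiples u ≤ Λ := by simpa using huΛ
  have hadd := hΛ.ht_nsmul_add hstep h.hasDeltaPoly hle hwΛ hw (fun j => (hrw j).1)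
    (Nat.sub_one_lt (pow_pos hp.pos r).ne') (neg_mem (AddSubgroup.mem_zmultiples u))
  have hcoord := h.exists_invPow_of_ht_nsmul_add hp.one_lt hr ((hrw _).2 dvd_rfl) hadd
  have hpow : p ^ r • w = u := by
    funext i
    obtain ⟨b, hb, hi⟩ := hcoord i
    rcases hi with hi | hi
    · obtain ⟨z, rfl⟩ := huw
      simp [hi]
    · rw [Pi.smul_apply, hi, hb, pow_nsmul_invPow hp.ne_zero, Nat.add_sub_cancel_left]
  refine ⟨r, w, hr, hwΛ, (hpow ▸ h).vecCons hr
    (fun i => (hcoord i).elim fun b hb => hb.2.imp_right fun hi => ⟨b, hi⟩)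
    (by simpa using hw) ?_⟩
  have hsup := hΛ.sup_zmultiples hstep h.hasDeltaPoly hle hwΛ hw (pow_pos hp.pos r) hrw
  rwa [sup_eq_right.2 (by simpa using huw), ← pow_add] at hsup

theorem last_le {ℓ : ℕ} (hp : 1 < p) (hstep : 0 < step) {Λ : AddSubgroup (ι → UnitAddCircle)}
    [Finite Λ] (hΛ : Nat.card Λ = p ^ ℓ) {g : ι → UnitAddCircle} (h : IsStaircase p step L g)
    (hg : g ∈ Λ) : L (Fin.last t) ≤ ℓ := by
  rw [← Nat.pow_dvd_pow_iff_le_right hp, ← hΛ, ← h.hasDeltaPoly.natCard_eq hstep]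
  exact AddSubgroup.card_dvd_of_le (by simpa using hg)

end IsStaircase

theorem exists_isStaircase {p ℓ step : ℕ} (hp : p.Prime) (hstep : 0 < step)
    {Λ : AddSubgroup (ι → UnitAddCircle)} [IsAddCyclic Λ]
    (hΛ : HasDeltaPoly (p ^ ℓ) step (Λ : Set (ι → UnitAddCircle))) :
    ∃ (t : ℕ) (L : Fin (t + 1) → ℕ) (g : ι → UnitAddCircle),
      IsStaircase p step L g ∧ L (Fin.last t) = ℓ ∧ Λ = AddSubgroup.zmultiples g := by
  classical
  have hcard : Nat.card Λ = p ^ ℓ := hΛ.natCard_eq hstep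
  have : Finite Λ := Nat.finite_of_card_ne_zero (hcard.trans_ne (pow_pos hp.pos ℓ).ne')
  let Reached (m : ℕ) : Prop := ∃ (t : ℕ) (L : Fin (t + 1) → ℕ) (g : ι → UnitAddCircle),
    IsStaircase p step L g ∧ L (Fin.last t) = m ∧ g ∈ Λ
  have hzero : Reached 0 := ⟨0, _, 0, isStaircase_zero p step, rfl, zero_mem Λ⟩
  obtain ⟨t, L, g, h, hlast, hg⟩ := Nat.findGreatest_spec (Nat.zero_le ℓ) hzero
  have hlastℓ : L (Fin.last t) = ℓ := by
    refine (h.last_le hp.one_lt hstep hcard hg).eq_of_not_lt fun hlt => ?_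
    obtain ⟨r, w, hr, hw, hext⟩ := h.exists_vecCons hp hstep hΛ hg hlt
    have hle := Nat.le_findGreatest (P := Reached) (hext.last_le hp.one_lt hstep hcard hw)
      ⟨_, _, w, hext, rfl, hw⟩
    rw [← Fin.succ_last, Matrix.cons_val_succ] at hle
    omega
  refine ⟨t, L, g, h, hlastℓ, (AddSubgroup.eq_of_le_of_card_ge (by simpa using hg) ?_).symm⟩
  rw [hcard, ← hlastℓ]
  exact (h.hasDeltaPoly.natCard_eq hstep).ge

end Staircase

section BlockSize

variable {ι : Type*} [Fintype ι] {p step t : ℕ} {L : Fin (t + 1) → ℕ} {g : ι → UnitAddCircle}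
  {c : ι → Fin (t + 1)}

namespace IsStaircase

theorem card_fiber_add_ht (hp : 1 < p) (h : IsStaircase p step L g)
    (hc : ∀ i, g i = invPow p (L (c i))) (b : Fin t) :
    (Nat.card {i // c i = b.succ} : ℝ) + ht (p ^ L b.succ • g) =
      (p : ℝ) ^ (L b.succ - L b.castSucc) * ht (p ^ L b.castSucc • g) := by
  classical
  have hterm (i : ι) : (p : ℝ) ^ (L b.succ - L b.castSucc) * fracR (p ^ L b.castSucc • g i) =
      (if c i = b.succ then 1 else 0) + fracR (p ^ L b.succ • g i) := by
    simp only [hc i, ← h.strictMono.injective.eq_iff (a := c i)]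
    refine pow_sub_mul_fracR_nsmul_invPow hp (h.strictMono b.castSucc_lt_succ) ?_
    rw [h.strictMono.le_iff_le, h.strictMono.le_iff_le]
    exact (le_or_gt (c i) b.castSucc).imp_right Fin.castSucc_lt_iff_succ_le.1
  simp only [ht, Pi.smul_apply, Finset.mul_sum, hterm, Finset.sum_add_distrib, Finset.sum_boole,
    Nat.card_eq_fintype_card, Fintype.card_subtype]

theorem card_fiber_eq_sub (hp : 1 < p) (h : IsStaircase p step L g)
    (hc : ∀ i, g i = invPow p (L (c i))) {b b' : Fin t} (hb : b.succ = b'.castSucc) :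
    Nat.card {i // c i = b.succ} =
      (p ^ (L (Fin.last t) - L b.castSucc) - p ^ (L (Fin.last t) - L b'.succ)) * step := by
  have hlast := h.strictMono.monotone b.succ.le_last
  have hlt := h.strictMono b.castSucc_lt_succ
  have hcount := h.card_fiber_add_ht hp hc b
  rw [h.ht_nsmul, hb, h.ht_nsmul, ← hb, ← mul_assoc, ← pow_add,
    add_comm (L b.succ - _), tsub_add_tsub_cancel hlast hlt.le] at hcount
  rw [Nat.sub_mul]
  apply Nat.eq_sub_of_add_eq
  exact_mod_cast hcount

theorem card_fiber_last (hp : 1 < p) (h : IsStaircase p step L g)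
    (hc : ∀ i, g i = invPow p (L (c i))) {b : Fin t} (hb : b.succ = Fin.last t) :
    Nat.card {i // c i = b.succ} = p ^ (L (Fin.last t) - L b.castSucc) * step := by
  have hzero : p ^ L b.succ • g = 0 := by
    funext i
    rw [Pi.smul_apply, hc, pow_nsmul_invPow (by positivity), hb,
      Nat.sub_eq_zero_of_le (h.strictMono.monotone (c i).le_last), invPow_zero, Pi.zero_apply]
  have hcount := h.card_fiber_add_ht hp hc b
  rw [hzero, ht_zero, add_zero, h.ht_nsmul, hb, Nat.sub_self, pow_zero, one_mul, ← hb] at hcount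
  rw [← hb]
  exact_mod_cast hcount

theorem card_fiber_pos (hp : 1 < p) (hstep : 0 < step) (h : IsStaircase p step L g)
    (hc : ∀ i, g i = invPow p (L (c i))) (b : Fin t) : 0 < Nat.card {i // c i = b.succ} := by
  rcases Fin.eq_castSucc_or_eq_last b.succ with ⟨b', hb⟩ | hb
  · have hlast := h.strictMono.monotone b'.succ.le_last
    have hlt : L b.castSucc < L b'.succ :=
      h.strictMono (b.castSucc_lt_succ.trans (hb ▸ b'.castSucc_lt_succ))
    rw [h.card_fiber_eq_sub hp hc hb]
    exact Nat.mul_pos (Nat.sub_pos_of_lt (Nat.pow_lt_pow_right hp (by omega))) hstep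
  · rw [h.card_fiber_last hp hc hb]
    positivity

theorem exists_mem_zmultiples_ne_zero_iff (hp : 1 < p) (h : IsStaircase p step L g)
    (hc : ∀ i, g i = invPow p (L (c i))) (i : ι) :
    (∃ x ∈ AddSubgroup.zmultiples g, x i ≠ 0) ↔ c i ≠ 0 := by
  have hi : g i = 0 ↔ c i = 0 := by
    rw [hc, invPow_eq_zero_iff hp, ← h.strictMono.injective.eq_iff, h.map_zero]
  rw [Ne, ← hi]
  refine ⟨?_, fun hne => ⟨g, AddSubgroup.mem_zmultiples g, hne⟩⟩
  rintro ⟨_, ⟨z, rfl⟩, hne⟩ h0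
  exact hne (by simp [h0])

end IsStaircase

end BlockSize

theorem exists_equiv_sigma_fin_card {α : Type*} [Finite α] {t : ℕ} (c : α → Fin (t + 1)) :
    ∃ e : {a // c a ≠ 0} ≃ (b : Fin t) × Fin (Nat.card {a // c a = b.succ}),
      ∀ a, (e a).1.succ = c a := by
  let blocks : {a // c a ≠ 0} ≃ (b : Fin t) × {a // c a = b.succ} :=
    { toFun := fun a => ⟨(c a).pred a.2, a, ((c a).succ_pred a.2).symm⟩
      invFun := fun x => ⟨x.2, x.2.2.trans_ne (Fin.succ_ne_zero x.1)⟩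
      left_inv := fun a => rfl
      right_inv := fun x => Sigma.subtype_ext (by simp [x.2.2]) rfl }
  exact ⟨blocks.trans (Equiv.sigmaCongrRight fun b => Finite.equivFin _),
    fun a => (c a).succ_pred a.2⟩

theorem stmt_11_general {ι : Type*} [Fintype ι] {p ℓ step : ℕ} (hp : p.Prime) (hℓ : 1 ≤ ℓ)
    (hstep : 0 < step) {Λ : AddSubgroup (ι → UnitAddCircle)}
    (hcyc : ∃ g : ι → UnitAddCircle, Λ = AddSubgroup.zmultiples g)
    (hΛ : HasDeltaPoly (p ^ ℓ) step (Λ : Set (ι → UnitAddCircle))) :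
    ∃ t : ℕ, ∃ ht1 : 1 ≤ t, ∃ L : Fin (t + 1) → ℕ,
      L 0 = 0 ∧ StrictMono L ∧ L (Fin.last t) = ℓ ∧
      ∃ s : Fin t → ℕ, (∀ b, 0 < s b) ∧
        (∀ b : Fin t, ∀ h2 : (b : ℕ) + 2 ≤ t,
          s b = (p ^ (ℓ - L b.castSucc) - p ^ (ℓ - L ⟨(b : ℕ) + 2, by omega⟩)) * step) ∧
        s ⟨t - 1, by omega⟩ = p ^ (ℓ - L ⟨t - 1, by omega⟩) * step ∧
        (∑ b, s b) = Nat.card {i // ∃ x ∈ Λ, x i ≠ 0} ∧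
        ∃ (e : {i // ∃ x ∈ Λ, x i ≠ 0} ≃ ((b : Fin t) × Fin (s b))) (g : ι → UnitAddCircle),
          Λ = AddSubgroup.zmultiples g ∧
          ∀ i : {i // ∃ x ∈ Λ, x i ≠ 0},
            g i = ((1 / (p : ℝ) ^ (L (e i).1.succ) : ℝ) : UnitAddCircle) := by
  have : IsAddCyclic Λ := by
    rw [AddSubgroup.isAddCyclic_iff_exists_zmultiples_eq_top]
    exact hcyc.imp fun g hg => hg.symm
  obtain ⟨t, L, g, h, rfl, rfl⟩ := exists_isStaircase hp hstep hΛ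
  choose c hc using h.exists_eq_invPow
  obtain ⟨e, he⟩ := exists_equiv_sigma_fin_card c
  let support := Equiv.subtypeEquivRight (h.exists_mem_zmultiples_ne_zero_iff hp.one_lt hc)
  have ht1 : 1 ≤ t := by
    rcases t.eq_zero_or_pos with rfl | ht1
    · exact absurd h.map_zero (Nat.pos_iff_ne_zero.1 hℓ)
    · exact ht1
  refine ⟨t, ht1, L, h.map_zero, h.strictMono, rfl, fun b => Nat.card {i // c i = b.succ},
    h.card_fiber_pos hp.one_lt hstep hc, fun b h2 => ?_, ?_, ?_, support.trans e, g, rfl,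
    fun i => ?_⟩
  · exact h.card_fiber_eq_sub hp.one_lt hc (b' := ⟨b + 1, h2⟩) rfl
  · exact h.card_fiber_last hp.one_lt hc (b := ⟨t - 1, by omega⟩) (Fin.ext (Nat.sub_add_cancel ht1))
  · simp [Nat.card_congr (support.trans e)]
  · exact (hc i).trans (congrArg (fun b => invPow p (L b)) (he (support i)).symm)

theorem stmt_11 (p ℓ k d : ℕ) (hp : p.Prime) (hℓ : 1 ≤ ℓ)
    (Λ : AddSubgroup (Fin (d+1) → AddCircle (1:ℝ)))
    (hfin : (Λ : Set (Fin (d+1) → AddCircle (1:ℝ))).Finite)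
    (hcyc : ∃ g : Fin (d+1) → AddCircle (1:ℝ), Λ = AddSubgroup.zmultiples g)
    (hnp : NonPyramidal (Λ : Set (Fin (d+1) → AddCircle (1:ℝ))))
    (hΛ : HasDeltaPoly (p^ℓ) (k+1) (Λ : Set (Fin (d+1) → AddCircle (1:ℝ)))) :
    ∃ t : ℕ, ∃ ht1 : 1 ≤ t, ∃ L : Fin (t+1) → ℕ,
      L 0 = 0 ∧ StrictMono L ∧ L (Fin.last t) = ℓ ∧
      ∃ s : Fin t → ℕ, (∀ b, 0 < s b) ∧
        (∀ b : Fin t, ∀ h2 : (b : ℕ) + 2 ≤ t,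
          s b = (p^(ℓ - L b.castSucc) - p^(ℓ - L ⟨(b : ℕ) + 2, by omega⟩)) * (k+1)) ∧
        s ⟨t-1, by omega⟩ = p^(ℓ - L ⟨t-1, by omega⟩) * (k+1) ∧
        (∑ b, s b) = d + 1 ∧
        ∃ e : Fin (d+1) ≃ ((b : Fin t) × Fin (s b)),
          Λ = AddSubgroup.zmultiples
            (fun i : Fin (d+1) =>
              ((1 / ((p : ℝ)^(L (e i).1.succ)) : ℝ) : AddCircle (1:ℝ))) := by
  obtain ⟨t, ht1, L, h0, hL, hlast, s, hpos, hs, hs_last, hsum, e, g, rfl, hg⟩ :=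
    stmt_11_general hp hℓ k.succ_pos hcyc hΛ
  let all : {i // ∃ x ∈ AddSubgroup.zmultiples g, x i ≠ 0} ≃ Fin (d + 1) :=
    Equiv.subtypeUnivEquiv hnp
  refine ⟨t, ht1, L, h0, hL, hlast, s, hpos, hs, hs_last, ?_, all.symm.trans e, ?_⟩
  · rw [hsum, Nat.card_congr all, Nat.card_fin]
  · exact congrArg AddSubgroup.zmultiples (funext fun i => hg (all.symm i))
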